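/- arXiv:1811.06155 — 2 statements merged into one kernel-verified Lean document; each statement's English description precedes it below -/
import Mathlib

section
/- Every finite connected simple graph G admits an orientation D such that the cop number of D is at least ⌈diam(G)/2⌉, where diam(G) is the diameter of G (the maximum over pairs of vertices of the graph distance). -/
open Classical

universe u

namespace CopsRobbers

variable {V : Type u}

/-- `CatchIn A k t c r` holds when, in the cops-and-robbers game on the digraph
with arc relation `A`, with the `k` cops currently at positions `c`, the robber
currently at `r`, and the cops to move, the cops can guarantee that some cop
occupies the robber's vertex within `t` further rounds (in each round every cop
either stays or moves along an out-arc, then the robber either stays or moves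
along an out-arc; capture may occur right after the cops' move or after the
robber's move). -/
inductive CatchIn (A : V → V → Prop) (k : ℕ) : ℕ → (Fin k → V) → V → Prop
  | caught {t : ℕ} {c : Fin k → V} {r : V} (h : ∃ i, c i = r) : CatchIn A k t c r
  | stepCatch {t : ℕ} {c : Fin k → V} {r : V} (c' : Fin k → V)
      (hc : ∀ i, c' i = c i ∨ A (c i) (c' i)) (h : ∃ i, c' i = r) :
      CatchIn A k (t + 1) c r
  | step {t : ℕ} {c : Fin k → V} {r : V} (c' : Fin k → V)
      (hc : ∀ i, c' i = c i ∨ A (c i) (c' i))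
      (h : ∀ r' : V, r' = r ∨ A r r' → CatchIn A k t c' r') :
      CatchIn A k (t + 1) c r

/-- `k` cops can choose initial positions guaranteeing capture within `t` rounds,
no matter which starting vertex the robber then chooses. -/
def CopsWinIn (A : V → V → Prop) (k t : ℕ) : Prop :=
  ∃ c : Fin k → V, ∀ r : V, CatchIn A k t c r

/-- `k` cops have a winning strategy on the digraph with arc relation `A`. -/
def CopsWin (A : V → V → Prop) (k : ℕ) : Prop := ∃ t, CopsWinIn A k t

/-- The cop number of a digraph: the least `k` such that `k` cops have a winning
strategy. -/
noncomputable def copNumber (A : V → V → Prop) : ℕ := sInf {k | CopsWin A k}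

/-- The capture time of a digraph: the least `t` such that `copNumber A` cops
can guarantee capture within `t` rounds. -/
noncomputable def captureTime (A : V → V → Prop) : ℕ :=
  sInf {t | CopsWinIn A (copNumber A) t}

/-- `A` is an orientation of the simple graph `G`: each edge of `G` is given
exactly one direction, and there are no other arcs. -/
def IsOrientation (G : SimpleGraph V) (A : V → V → Prop) : Prop :=
  (∀ u v, G.Adj u v ↔ (A u v ∨ A v u)) ∧ ∀ u v, A u v → ¬ A v u

/-- An oriented graph: a digraph with no loops and no pair of opposite arcs. -/
def IsOriented (A : V → V → Prop) : Prop := ∀ u v, A u v → ¬ A v u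

/-- A digraph is strongly connected if every vertex is reachable from every
other by a directed path. -/
def StronglyConnected (A : V → V → Prop) : Prop :=
  ∀ u v : V, Relation.ReflTransGen A u v

/-!
Orient the edges of `G` along a proper colouring by a linear order in which the lowest colour class
is a given independent set. Every vertex of that set becomes a source, and a robber waiting on a
source can only be caught by a cop who started there. Hence some orientation has cop number at least
the independence number of `G`, and every other vertex of a shortest path forms an independent set.
-/

/-- A source of the digraph with arc relation `A`: a vertex that no arc enters. -/
def IsSource (A : V → V → Prop) (s : V) : Prop := ∀ v, ¬ A v s

section Sources

variable {A : V → V → Prop} {k : ℕ}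

lemma IsSource.mem_range_of_cops_move {c c' : Fin k → V} {s : V} (hs : IsSource A s)
    (hc : ∀ i, c' i = c i ∨ A (c i) (c' i)) (h : s ∈ Set.range c') : s ∈ Set.range c := by
  obtain ⟨i, rfl⟩ := h
  exact ⟨i, ((hc i).resolve_right (hs _)).symm⟩

lemma CatchIn.mem_range_of_isSource {t : ℕ} {c : Fin k → V} {s : V} (h : CatchIn A k t c s)
    (hs : IsSource A s) : s ∈ Set.range c := by
  induction h with
  | caught h => exact h
  | stepCatch c' hc h => exact hs.mem_range_of_cops_move hc h
  | step c' hc _ ih => exact hs.mem_range_of_cops_move hc (ih _ (Or.inl rfl) hs)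

lemma CopsWin.encard_setOf_isSource_le (h : CopsWin A k) : {s | IsSource A s}.encard ≤ k := by
  obtain ⟨t, c, hc⟩ := h
  calc {s | IsSource A s}.encard
      ≤ (c '' Set.univ).encard := Set.encard_le_encard fun s hs => by
        simpa only [Set.image_univ] using (hc s).mem_range_of_isSource hs
    _ ≤ (Set.univ : Set (Fin k)).encard := Set.encard_image_le c Set.univ
    _ = k := by simp

lemma copsWin_card [Fintype V] (A : V → V → Prop) : CopsWin A (Fintype.card V) :=
  ⟨0, (Fintype.equivFin V).symm, fun r => .caught ((Fintype.equivFin V).symm.surjective r)⟩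

lemma copsWin_copNumber [Finite V] (A : V → V → Prop) : CopsWin A (copNumber A) :=
  have := Fintype.ofFinite V
  Nat.sInf_mem (s := {k | CopsWin A k}) ⟨Fintype.card V, copsWin_card A⟩

lemma card_le_copNumber_of_isSource [Finite V] {S : Finset V} (hS : ∀ s ∈ S, IsSource A s) :
    S.card ≤ copNumber A := by
  have h : (S : Set V).encard ≤ copNumber A :=
    (Set.encard_le_encard hS).trans (copsWin_copNumber A).encard_setOf_isSource_le
  simpa only [Set.encard_coe_eq_coe_finsetCard, Nat.cast_le] using h

end Sources

section Orientations

variable {G : SimpleGraph V}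

/-- The orientation of `G` along a proper colouring by ordered colours: each edge points towards
its endpoint of larger colour. -/
def upwardArc {ι : Type*} [LT ι] (C : G.Coloring ι) (u v : V) : Prop := G.Adj u v ∧ C u < C v

lemma isOrientation_upwardArc {ι : Type*} [LinearOrder ι] (C : G.Coloring ι) :
    IsOrientation G (upwardArc C) := by
  refine ⟨fun u v => ⟨fun h => ?_, ?_⟩, fun u v huv hvu => huv.2.asymm hvu.2⟩
  · exact (C.valid h).lt_or_gt.imp (⟨h, ·⟩) (⟨h.symm, ·⟩)
  · rintro (h | h)
    exacts [h.1, h.1.symm]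

lemma isSource_upwardArc_of_isMin {ι : Type*} [Preorder ι] {C : G.Coloring ι} {s : V}
    (hs : IsMin (C s)) : IsSource (upwardArc C) s :=
  fun _ h => hs.not_lt h.2

lemma exists_coloring_withBot_eq_bot {S : Set V} (hS : G.IsIndepSet S) :
    ∃ C : G.Coloring (WithBot V), ∀ s ∈ S, C s = ⊥ := by
  refine ⟨.mk (fun v => if v ∈ S then ⊥ else (v : WithBot V)) fun {u v} huv => ?_,
    fun s hs => if_pos hs⟩
  have hnot : ¬ (u ∈ S ∧ v ∈ S) := fun ⟨hu, hv⟩ => hS hu hv huv.ne huv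
  grind [huv.ne, WithBot.coe_ne_bot, WithBot.coe_inj]

lemma exists_isOrientation_forall_isSource {S : Set V} (hS : G.IsIndepSet S) :
    ∃ A : V → V → Prop, IsOrientation G A ∧ ∀ s ∈ S, IsSource A s := by
  obtain ⟨_, -⟩ := exists_wellFoundedLT V
  obtain ⟨C, hC⟩ := exists_coloring_withBot_eq_bot hS
  exact ⟨upwardArc C, isOrientation_upwardArc C, fun s hs =>
    isSource_upwardArc_of_isMin (hC s hs ▸ isMin_bot)⟩

lemma exists_isOrientation_indepNum_le_copNumber [Finite V] (G : SimpleGraph V) :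
    ∃ A : V → V → Prop, IsOrientation G A ∧ G.indepNum ≤ copNumber A := by
  have := Fintype.ofFinite V
  obtain ⟨S, hS⟩ := G.exists_isNIndepSet_indepNum
  obtain ⟨A, hA, hsource⟩ := exists_isOrientation_forall_isSource hS.isIndepSet
  exact ⟨A, hA, hS.card_eq ▸ card_le_copNumber_of_isSource hsource⟩

end Orientations

section Geodesics

variable {G : SimpleGraph V} {x y : V}

lemma exists_dist_eq_of_le_dist (hxy : G.Reachable x y) {n : ℕ} (hn : n ≤ G.dist x y) :
    ∃ z, G.dist x z = n := by
  obtain ⟨p, hp⟩ := hxy.exists_walk_length_eq_dist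
  refine ⟨p.getVert n, ?_⟩
  rw [← SimpleGraph.length_eq_dist_of_subwalk hp (p.isSubwalk_take n), p.take_length,
    min_eq_left (hp ▸ hn)]

lemma dist_div_two_lt_indepNum [Finite V] (hxy : G.Reachable x y) :
    G.dist x y / 2 < G.indepNum := by
  have hexists (i : Fin (G.dist x y / 2 + 1)) : ∃ z, G.dist x z = 2 * i :=
    exists_dist_eq_of_le_dist hxy (by omega)
  choose f hf using hexists
  have hinj : f.Injective := fun i j hij => by
    have hdist := congrArg (G.dist x) hij
    rw [hf, hf] at hdist
    omega
  have hindep : G.IsIndepSet (Finset.univ.image f : Finset V) := by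
    rw [Finset.coe_image, Finset.coe_univ, Set.image_univ]
    rintro _ ⟨i, rfl⟩ _ ⟨j, rfl⟩ hne hadj
    have hdiff := hadj.diff_dist_adj (u := x)
    rw [hf, hf] at hdiff
    exact hne (congrArg f (by omega))
  calc G.dist x y / 2
      < (Finset.univ.image f).card := by
        rw [Finset.card_image_of_injective _ hinj, Finset.card_fin]
        exact Nat.lt_succ_self _
    _ ≤ G.indepNum := hindep.card_le_indepNum

end Geodesics

/-- Every finite connected simple graph `G` admits an orientation whose cop
number is at least `⌈diam G / 2⌉`. -/
theorem stmt_1 {V : Type u} [Fintype V] (G : SimpleGraph V) (hG : G.Connected) :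
    ∃ A : V → V → Prop, IsOrientation G A ∧ (G.diam + 1) / 2 ≤ copNumber A := by
  have := hG.nonempty
  obtain ⟨A, hA, hindep⟩ := exists_isOrientation_indepNum_le_copNumber G
  obtain ⟨x, y, hxy⟩ := G.exists_dist_eq_diam
  have hdist : G.dist x y / 2 < G.indepNum := dist_div_two_lt_indepNum (hG x y)
  exact ⟨A, hA, by omega⟩

end CopsRobbers
end

section
/- For every integer k ≥ 3 there exists a cop-win digraph D on n = 2k+1 vertices whose capture time satisfies capt(D) ≥ (k−1)²; in particular, for arbitrarily large n there exist n-vertex cop-win digraphs with capture time at least (n−3)²/4, so cop-win digraphs can have capture time quadratic in the number of vertices. -/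
open Classical

universe u

namespace CopsRobbers

variable {V : Type u}

/-!
The digraph consists of a *route*, patrolled by the cop, and a directed cycle without exits. The
route has two posts and a path whose first vertex, the hub, dominates the route; going from one
post to the other means traversing the whole path. The odd vertices of the cycle are attacked from
one post, the even ones from the other, and vertex `0` from everywhere on the route.

A cop who enters the cycle without capturing can be avoided forever. So the cop has to reach the
post attacking the robber's vertex, whereupon the robber steps ahead, the parity changes, and the
cop must walk to the other post. This repeats once for each vertex of the cycle, until the robber
is forced onto vertex `0`. With route and cycle of about `n / 2` vertices each, this takes about
`(n / 2) ^ 2` rounds.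
-/

section Game

variable {A : V → V → Prop} {k t : ℕ}

theorem catchIn_zero_iff {c : Fin k → V} {r : V} : CatchIn A k 0 c r ↔ ∃ i, c i = r :=
  ⟨fun h => by cases h; assumption, .caught⟩

theorem catchIn_succ_iff {c : Fin k → V} {r : V} :
    CatchIn A k (t + 1) c r ↔ ∃ c' : Fin k → V, (∀ i, c' i = c i ∨ A (c i) (c' i)) ∧
      ((∃ i, c' i = r) ∨ ∀ r', r' = r ∨ A r r' → CatchIn A k t c' r') := by
  constructor
  · rintro (h | ⟨c', hc', h⟩ | ⟨c', hc', h⟩)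
    · exact ⟨c, fun _ => .inl rfl, .inl h⟩
    · exact ⟨c', hc', .inl h⟩
    · exact ⟨c', hc', .inr h⟩
  · rintro ⟨c', hc', h | h⟩
    · exact .stepCatch c' hc' h
    · exact .step c' hc' h

theorem catchIn_one_zero_iff {c r : V} : CatchIn A 1 0 (fun _ => c) r ↔ c = r := by
  simp [catchIn_zero_iff]

theorem catchIn_one_succ_iff {c r : V} :
    CatchIn A 1 (t + 1) (fun _ => c) r ↔ ∃ c', (c' = c ∨ A c c') ∧
      (c' = r ∨ ∀ r', r' = r ∨ A r r' → CatchIn A 1 t (fun _ => c') r') := by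
  simp only [catchIn_succ_iff, (Equiv.funUnique (Fin 1) V).symm.surjective.exists, exists_const,
    forall_const, Equiv.funUnique_symm_apply, uniqueElim_const]
  rfl

theorem catchIn_of_arc {c r : V} (h : A c r) : CatchIn A 1 (t + 1) (fun _ => c) r :=
  catchIn_one_succ_iff.2 ⟨r, .inr h, .inl rfl⟩

theorem copsWinIn_one_iff :
    CopsWinIn A 1 t ↔ ∃ c, ∀ r, CatchIn A 1 t (fun _ => c) r := by
  simp only [CopsWinIn, (Equiv.funUnique (Fin 1) V).symm.surjective.exists]
  rfl

theorem not_copsWin_zero [Nonempty V] : ¬ CopsWin A 0 := by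
  have not_catchIn (t : ℕ) (c : Fin 0 → V) (r : V) : ¬ CatchIn A 0 t c r := by
    induction t generalizing c with
    | zero => simp [catchIn_zero_iff]
    | succ t ih =>
      rw [catchIn_succ_iff]
      rintro ⟨c', -, ⟨i, -⟩ | h⟩
      · exact i.elim0
      · exact ih c' (h r (.inl rfl))
  rintro ⟨t, c, hc⟩
  exact not_catchIn t c (Classical.arbitrary V) (hc _)

theorem copNumber_eq_one [Nonempty V] (h : CopsWin A 1) : copNumber A = 1 := by
  have hle : copNumber A ≤ 1 := Nat.sInf_le h
  have hwin : CopsWin A (copNumber A) := Nat.sInf_mem (s := {k | CopsWin A k}) ⟨1, h⟩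
  have hne : copNumber A ≠ 0 := fun h0 => not_copsWin_zero (h0 ▸ hwin)
  omega

end Game

/-- The vertices of the route patrolled by the cop: two posts, and a path numbered from its hub
`path 0`. -/
inductive Route (q : ℕ)
  | post (b : Bool)
  | path (i : Fin (q + 1))

/-- The arcs of the route: the path leads down to its hub, the hub dominates the route, and both
posts lead to the far end of the path. The loop at the hub does not affect the game, since staying
is always allowed. -/
inductive RouteArc {q : ℕ} : Route q → Route q → Prop
  | postPath (b : Bool) : RouteArc (.post b) (.path (Fin.last q))
  | pathPath (i : Fin q) : RouteArc (.path i.succ) (.path i.castSucc)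
  | hub (v : Route q) : RouteArc (.path 0) v

/-- The digraph with large capture time: a route from which a directed cycle on `Fin (m + 3)`,
having no exits, is attacked. Vertex `0` of the cycle is attacked from the whole route, and vertex
`j` from the post given by its parity (`true` for odd). -/
inductive PatrolArc (q m : ℕ) : Route q ⊕ Fin (m + 3) → Route q ⊕ Fin (m + 3) → Prop
  | route {u v : Route q} (h : RouteArc u v) : PatrolArc q m (.inl u) (.inl v)
  | attackZero (u : Route q) : PatrolArc q m (.inl u) (.inr 0)
  | attack (j : Fin (m + 3)) : PatrolArc q m (.inl (.post (j : ℕ).bodd)) (.inr j)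
  | cycle (j : Fin (m + 3)) : PatrolArc q m (.inr j) (.inr (j + 1))

namespace Route

variable {q : ℕ}

/-- The sum type underlying `Route q`, used to count its elements. -/
def equivSum (q : ℕ) : Route q ≃ Bool ⊕ Fin (q + 1) where
  toFun
    | post b => .inl b
    | path i => .inr i
  invFun := Sum.elim post path
  left_inv u := by cases u <;> rfl
  right_inv x := by cases x <;> rfl

instance : Fintype (Route q) := .ofEquiv _ (equivSum q).symm

theorem card (q : ℕ) : Fintype.card (Route q) = q + 3 := by
  simp only [Fintype.card_congr (equivSum q), Fintype.card_sum, Fintype.card_bool,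
    Fintype.card_fin]
  omega

/-- The length of a shortest directed walk on the route to `post b`. -/
def distPost (b : Bool) : Route q → ℕ
  | post c => if c = b then 0 else q + 2
  | path i => i + 1

theorem distPost_le (b : Bool) (u : Route q) : distPost b u ≤ q + 2 := by
  cases u <;> grind [distPost]

theorem distPost_le_of_arc {u v : Route q} (h : RouteArc u v) (b : Bool) :
    distPost b u ≤ distPost b v + 1 := by
  cases h with
  | postPath c => grind [distPost]
  | pathPath i => simp [distPost]
  | hub => simp [distPost]

theorem exists_arc_distPost_add_one {b : Bool} {u : Route q} (h : u ≠ post b) :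
    ∃ v, RouteArc u v ∧ distPost b v + 1 = distPost b u := by
  rcases u with c | i
  · have hcb : c ≠ b := fun e => h (e ▸ rfl)
    exact ⟨_, .postPath c, by simp [distPost, hcb]⟩
  · cases i using Fin.cases with
    | zero => exact ⟨post b, .hub _, by simp [distPost]⟩
    | succ i => exact ⟨_, .pathPath i, by simp [distPost]⟩

end Route

section Patrol

variable {q m : ℕ}

theorem patrolArc_inl_inr_iff {u : Route q} {j : Fin (m + 3)} :
    PatrolArc q m (.inl u) (.inr j) ↔ j = 0 ∨ u = .post (j : ℕ).bodd := by
  constructor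
  · rintro (_ | _ | _)
    · exact .inl rfl
    · exact .inr rfl
  · rintro (rfl | rfl)
    · exact .attackZero u
    · exact .attack j

theorem not_patrolArc_post_add_one {j : Fin (m + 3)} (hj : j ≠ Fin.last (m + 2)) :
    ¬ PatrolArc q m (.inl (.post (j : ℕ).bodd)) (.inr (j + 1)) := by
  have hval := Fin.val_add_one_of_lt (Fin.lt_last_iff_ne_last.2 hj)
  simp [patrolArc_inl_inr_iff, Fin.ext_iff (a := j + 1), hval]

/-- The number of cop moves, under optimal play, before a cop at `u` can no longer be prevented
from capturing a robber at vertex `j ≠ 0` of the cycle, the robber being to move: the walk to the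
post attacking `j`, and then one walk between the posts for each of the `m + 2 - j` steps that lead
the robber to the last vertex. -/
def pursuitTime (u : Route q) (j : Fin (m + 3)) : ℕ :=
  u.distPost (j : ℕ).bodd + (q + 2) * (m + 2 - j)

theorem pursuitTime_le_of_arc {u v : Route q} (h : RouteArc u v) (j : Fin (m + 3)) :
    pursuitTime u j ≤ pursuitTime v j + 1 := by
  have := Route.distPost_le_of_arc h (j : ℕ).bodd
  unfold pursuitTime
  omega

theorem pursuitTime_le_of_move {u v : Route q}
    (h : .inl v = (.inl u : Route q ⊕ Fin (m + 3)) ∨ PatrolArc q m (.inl u) (.inl v))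
    (j : Fin (m + 3)) : pursuitTime u j ≤ pursuitTime v j + 1 := by
  rcases h with heq | harc
  · rw [Sum.inl.inj heq]
    exact Nat.le_succ _
  · cases harc with
    | route harc => exact pursuitTime_le_of_arc harc j

theorem exists_arc_pursuitTime_add_one {u : Route q} {j : Fin (m + 3)}
    (h : u ≠ .post (j : ℕ).bodd) :
    ∃ v, RouteArc u v ∧ pursuitTime v j + 1 = pursuitTime u j := by
  obtain ⟨v, hv, hdist⟩ := Route.exists_arc_distPost_add_one h
  exact ⟨v, hv, by unfold pursuitTime; omega⟩

theorem pursuitTime_eq_of_ne_last (u : Route q) {j : Fin (m + 3)} (hj : j ≠ Fin.last (m + 2)) :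
    pursuitTime u j =
      u.distPost (j : ℕ).bodd + ((q + 2) * (m + 2 - (j + 1 : Fin (m + 3))) + (q + 2)) := by
  have hval := Fin.val_add_one_of_lt (Fin.lt_last_iff_ne_last.2 hj)
  have hlt := (j + 1).isLt
  rw [hval] at hlt ⊢
  rw [pursuitTime, ← Nat.mul_add_one, show m + 2 - (j : ℕ) = m + 2 - (j + 1) + 1 by omega]

theorem pursuitTime_add_one_le (u : Route q) {j : Fin (m + 3)} (hj : j ≠ Fin.last (m + 2)) :
    pursuitTime u (j + 1) ≤ pursuitTime u j := by
  have := u.distPost_le ((j + 1 : Fin (m + 3)) : ℕ).bodd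
  rw [pursuitTime_eq_of_ne_last u hj, pursuitTime]
  omega

theorem pursuitTime_post_add_one {j : Fin (m + 3)} (hj : j ≠ Fin.last (m + 2)) :
    pursuitTime (.post (j : ℕ).bodd : Route q) (j + 1) =
      pursuitTime (.post (j : ℕ).bodd : Route q) j := by
  rw [pursuitTime_eq_of_ne_last _ hj, pursuitTime,
    Fin.val_add_one_of_lt (Fin.lt_last_iff_ne_last.2 hj), Nat.bodd_succ]
  simp [Route.distPost, add_comm]

theorem exists_cycle_evasion {i j : Fin (m + 3)} (h : j ≠ i) :
    ∃ j', (.inr j' = (.inr j : Route q ⊕ Fin (m + 3)) ∨ PatrolArc q m (.inr j) (.inr j')) ∧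
      j' ≠ i ∧ j' ≠ i + 1 := by
  by_cases hj : j = i + 1
  · have htwo : (1 : Fin (m + 3)) + 1 ≠ 0 := by
      simp [Fin.ext_iff, Fin.val_add, Nat.mod_eq_of_lt (show 2 < m + 3 by omega)]
    exact ⟨j + 1, .inr (.cycle j), by simpa [hj, add_assoc] using htwo, by simp [hj]⟩
  · exact ⟨j, .inl rfl, h, hj⟩

theorem not_catchIn_cycle {i j : Fin (m + 3)} (h : j ≠ i) (h_succ : j ≠ i + 1) (t : ℕ) :
    ¬ CatchIn (PatrolArc q m) 1 t (fun _ => .inr i) (.inr j) := by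
  induction t generalizing i j with
  | zero => simpa [catchIn_one_zero_iff] using h.symm
  | succ t ih =>
    rw [catchIn_one_succ_iff]
    rintro ⟨c', hc', hwin⟩
    obtain ⟨i', rfl, hi'⟩ : ∃ i', c' = .inr i' ∧ j ≠ i' := by
      rcases hc' with rfl | hc'
      · exact ⟨i, rfl, h⟩
      · cases hc'
        exact ⟨i + 1, rfl, h_succ⟩
    obtain ⟨j', hmove, hj', hj'_succ⟩ := exists_cycle_evasion (q := q) hi'
    rcases hwin with hcaught | hwin
    · exact hi' (Sum.inr.inj hcaught).symm
    · exact ih hj' hj'_succ (hwin _ hmove)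

theorem exists_not_catchIn_cycle {i j : Fin (m + 3)} (h : j ≠ i) (t : ℕ) :
    ∃ r, (r = .inr j ∨ PatrolArc q m (.inr j) r) ∧
      ¬ CatchIn (PatrolArc q m) 1 t (fun _ => .inr i) r := by
  obtain ⟨j', hmove, hj', hj'_succ⟩ := exists_cycle_evasion h
  exact ⟨_, hmove, not_catchIn_cycle hj' hj'_succ t⟩

theorem pursuitTime_lt_of_catchIn {t : ℕ} {u : Route q} {j : Fin (m + 3)}
    (hsafe : ¬ PatrolArc q m (.inl u) (.inr j))
    (h : CatchIn (PatrolArc q m) 1 t (fun _ => .inl u) (.inr j)) : pursuitTime u j < t := by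
  induction t generalizing u j with
  | zero => simp [catchIn_one_zero_iff] at h
  | succ t ih =>
    obtain ⟨v | i, hc, hwin⟩ := catchIn_one_succ_iff.1 h
    · replace hwin := hwin.resolve_left Sum.inl_ne_inr
      suffices pursuitTime v j < t by
        have := pursuitTime_le_of_move hc j
        omega
      by_cases hattack : PatrolArc q m (.inl v) (.inr j)
      · have hj : j ≠ 0 := fun hj => hsafe (patrolArc_inl_inr_iff.2 (.inl hj))
        obtain rfl := (patrolArc_inl_inr_iff.1 hattack).resolve_left hj
        by_cases hlast : j = Fin.last (m + 2)
        · have ht : t ≠ 0 := by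
            rintro rfl
            simpa [catchIn_one_zero_iff] using hwin _ (.inl rfl)
          simpa [pursuitTime, Route.distPost, hlast] using Nat.pos_of_ne_zero ht
        · rw [← pursuitTime_post_add_one hlast]
          exact ih (not_patrolArc_post_add_one hlast) (hwin _ (.inr (.cycle j)))
      · exact ih hattack (hwin _ (.inl rfl))
    · have hij : j ≠ i := by
        rintro rfl
        exact hsafe (hc.resolve_left Sum.inr_ne_inl)
      obtain ⟨r, hmove, hr⟩ := exists_not_catchIn_cycle hij t
      exact absurd (hwin.resolve_left (fun e => hij (Sum.inr.inj e).symm) r hmove) hr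

theorem catchIn_of_pursuitTime_le {t : ℕ} {u : Route q} {j : Fin (m + 3)}
    (h : j ≠ 0 → pursuitTime u j ≤ t) :
    CatchIn (PatrolArc q m) 1 (t + 1) (fun _ => .inl u) (.inr j) := by
  induction t using Nat.strong_induction_on generalizing u j with
  | _ t ih =>
    by_cases hattack : PatrolArc q m (.inl u) (.inr j)
    · exact catchIn_of_arc hattack
    obtain ⟨hj, hu⟩ := not_or.1 (patrolArc_inl_inr_iff.not.1 hattack)
    obtain ⟨v, harc, hv⟩ := exists_arc_pursuitTime_add_one hu
    obtain ⟨s, rfl⟩ : ∃ s, t = s + 1 := Nat.exists_eq_succ_of_ne_zero (by have := h hj; omega)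
    have hvs : pursuitTime v j ≤ s := by have := h hj; omega
    refine catchIn_one_succ_iff.2 ⟨_, .inr (.route harc), .inr ?_⟩
    rintro r (rfl | hr)
    · exact ih s s.lt_succ_self fun _ => hvs
    · cases hr
      refine ih s s.lt_succ_self fun hne => (pursuitTime_add_one_le v ?_).trans hvs
      rintro rfl
      exact hne (Fin.last_add_one _)

theorem copsWin_patrolArc : CopsWin (PatrolArc q m) 1 := by
  refine ⟨(q + 2) * (m + 3) + 1, fun _ => .inl (.path 0), ?_⟩
  rintro (v | j)
  · exact catchIn_of_arc (.route (.hub v))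
  · refine catchIn_of_pursuitTime_le fun _ => ?_
    calc pursuitTime (.path 0) j ≤ (q + 2) + (q + 2) * (m + 2) :=
          add_le_add (Route.distPost_le _ _) (Nat.mul_le_mul_left _ (Nat.sub_le _ _))
      _ = (q + 2) * (m + 3) := by ring

theorem copNumber_patrolArc : copNumber (PatrolArc q m) = 1 :=
  have : Nonempty (Route q ⊕ Fin (m + 3)) := ⟨.inr 0⟩
  copNumber_eq_one copsWin_patrolArc

theorem exists_le_pursuitTime (m : ℕ) (u : Route q) :
    ∃ j : Fin (m + 3), ¬ PatrolArc q m (.inl u) (.inr j) ∧ (q + 2) * (m + 1) ≤ pursuitTime u j := by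
  by_cases hu : u = .post true
  · refine ⟨⟨2, by omega⟩, by simp [patrolArc_inl_inr_iff, Fin.ext_iff, hu], le_of_eq ?_⟩
    calc (q + 2) * (m + 1) = (q + 2) + (q + 2) * m := by ring
      _ = pursuitTime u ⟨2, by omega⟩ := by simp [pursuitTime, Route.distPost, hu]
  · exact ⟨⟨1, by omega⟩, by simp [patrolArc_inl_inr_iff, hu], by simp [pursuitTime]⟩

theorem lt_of_copsWinIn_patrolArc {t : ℕ} (h : CopsWinIn (PatrolArc q m) 1 t) :
    (q + 2) * (m + 1) < t := by
  obtain ⟨u | i, hc⟩ := copsWinIn_one_iff.1 h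
  · obtain ⟨j, hsafe, htime⟩ := exists_le_pursuitTime m u
    exact htime.trans_lt (pursuitTime_lt_of_catchIn hsafe (hc _))
  · obtain ⟨r, -, hr⟩ := exists_not_catchIn_cycle (j := i + 1) (i := i) (by simp) t
    exact absurd (hc r) hr

theorem lt_captureTime_patrolArc : (q + 2) * (m + 1) < captureTime (PatrolArc q m) := by
  apply lt_of_copsWinIn_patrolArc
  rw [captureTime, copNumber_patrolArc]
  exact Nat.sInf_mem (s := {t | CopsWinIn _ 1 t}) copsWin_patrolArc

end Patrol

theorem stmt_12_general (n : ℕ) (hn : 6 ≤ n) :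
    ∃ (V : Type) (_ : Fintype V) (A : V → V → Prop),
      Fintype.card V = n ∧ copNumber A = 1 ∧ (n - 3) ^ 2 ≤ 4 * captureTime A := by
  obtain ⟨q, m, hcard, hbal⟩ : ∃ q m, n = q + m + 6 ∧ (m = q ∨ m = q + 1) :=
    ⟨(n - 6) / 2, n - 6 - (n - 6) / 2, by omega, by omega⟩
  refine ⟨Route q ⊕ Fin (m + 3), inferInstance, PatrolArc q m, ?_, copNumber_patrolArc, ?_⟩
  · rw [Fintype.card_sum, Route.card, Fintype.card_fin]
    omega
  · have hcapt : (q + 2) * (m + 1) + 1 ≤ captureTime (PatrolArc q m) := lt_captureTime_patrolArc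
    rw [show n - 3 = q + m + 3 by omega]
    rcases hbal with rfl | rfl <;> nlinarith

/-- For every `k ≥ 3` there is a cop-win digraph on `2k + 1` vertices whose
capture time is at least `(k - 1)^2`; in particular cop-win digraphs can have
capture time quadratic in the number of vertices. -/
theorem stmt_12 (k : ℕ) (hk : 3 ≤ k) :
    ∃ (V : Type) (_ : Fintype V) (A : V → V → Prop),
      Fintype.card V = 2 * k + 1 ∧ copNumber A = 1 ∧
      (k - 1) ^ 2 ≤ captureTime A := by
  obtain ⟨V, hV, A, hcard, hcop, hcapt⟩ := stmt_12_general (2 * k + 1) (by omega)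
  refine ⟨V, hV, A, hcard, hcop, ?_⟩
  rw [show 2 * k + 1 - 3 = 2 * (k - 1) by omega, mul_pow] at hcapt
  omega

end CopsRobbers
end
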